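/- There exist an ordered Polish space E and a monotone Markov kernel P on E such that the set M = {(x,y) : x ⪯ y} is achievable and P admits a (necessarily unique) stationary distribution π, yet not all transition probabilities converge weakly to π; i.e., there exists y ∈ E such that the laws of Xₙʸ do not converge weakly to π. -/

import Mathlib

open MeasureTheory ProbabilityTheory Filter Topology

/-- `μ` is *stochastically smaller* than `ν` (written `μ ⪯ ν` in the paper):
`μ I ≤ ν I` for every Borel increasing (upper) set `I`. -/
def StochDom {E : Type*} [MeasurableSpace E] [Preorder E] (μ ν : Measure E) : Prop :=
  ∀ I : Set E, MeasurableSet I → IsUpperSet I → μ I ≤ ν I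

/-- A Markov kernel `P` is *(stochastically) monotone* if for every bounded monotone
measurable `g : E → [0,1]` the map `x ↦ ∫ g dP(x)` is again monotone. -/
def MonotoneKernel {E : Type*} [MeasurableSpace E] [Preorder E] (P : Kernel E E) : Prop :=
  ∀ g : E → ℝ, Measurable g → Monotone g → (∀ x, g x ∈ Set.Icc (0 : ℝ) 1) →
    Monotone fun x => ∫ y, g y ∂(P x)

/-- The `n`-step transition kernel `P⁽ⁿ⁾` of a Markov kernel `P`;
`kpow P n x` is the law of `Xₙˣ`, the chain with kernel `P` started at `x`. -/
noncomputable def kpow {E : Type*} [MeasurableSpace E] (P : Kernel E E) : ℕ → Kernel E E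
  | 0 => Kernel.id
  | n + 1 => P.comp (kpow P n)

/-- The process `Z` on `(Ω, μ)` is a (possibly time-inhomogeneous) Markov chain with
one-step kernels `Q n`, expressed through finite-dimensional distributions: for every
bounded measurable cylinder functional `φ` of the past and every Borel set `A`,
`E[φ(Z₀,…,Zₙ) · 1_A(Z_{n+1})] = E[φ(Z₀,…,Zₙ) · (Q n)(Zₙ, A)]`. -/
def MCStep {Ω S : Type*} [MeasurableSpace Ω] [MeasurableSpace S]
    (μ : Measure Ω) (Q : ℕ → Kernel S S) (Z : ℕ → Ω → S) : Prop :=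
  ∀ (n : ℕ) (A : Set S), MeasurableSet A →
    ∀ φ : (Fin (n + 1) → S) → ℝ, Measurable φ → (∀ v, φ v ∈ Set.Icc (0 : ℝ) 1) →
      ∫ ω, φ (fun i => Z i.1 ω) * A.indicator (fun _ => (1 : ℝ)) (Z (n + 1) ω) ∂μ
        = ∫ ω, φ (fun i => Z i.1 ω) * ((Q n) (Z n ω) A).toReal ∂μ

/-- `X` on `(Ω, μ)` is a time-homogeneous Markov chain with kernel `P` started at `x`. -/
def IsMChain {E Ω : Type*} [MeasurableSpace E] [MeasurableSpace Ω]
    (P : Kernel E E) (x : E) (μ : Measure Ω) (X : ℕ → Ω → E) : Prop :=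
  IsProbabilityMeasure μ ∧ (∀ n, Measurable (X n)) ∧ (∀ᵐ ω ∂μ, X 0 ω = x) ∧
    MCStep μ (fun _ => P) X

/-- A *Markovian coupling* of two chains with kernel `P` started at `x` and `y`:
both coordinates are Markov chains with kernel `P` and the pair process is itself a
(possibly time-inhomogeneous) Markov chain. -/
def IsMarkovianCoupling {E Ω : Type*} [MeasurableSpace E] [MeasurableSpace Ω]
    (P : Kernel E E) (x y : E) (μ : Measure Ω) (X Y : ℕ → Ω → E) : Prop :=
  IsMChain P x μ X ∧ IsMChain P y μ Y ∧
    ∃ Q : ℕ → Kernel (E × E) (E × E), (∀ n, IsMarkovKernel (Q n)) ∧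
      MCStep μ Q fun n ω => (X n ω, Y n ω)

/-- A set `H ⊆ E × E` is *achievable* for the kernel `P` if for all `x, y` there is a
Markovian coupling of the chains started at `x` and `y` whose hitting time of `H`
is finite almost surely. -/
def Achievable {E : Type*} [MeasurableSpace E] (P : Kernel E E) (H : Set (E × E)) : Prop :=
  ∀ x y : E, ∃ (Ω : Type) (_ : MeasurableSpace Ω) (μ : Measure Ω) (X Y : ℕ → Ω → E),
    IsMarkovianCoupling P x y μ X Y ∧ ∀ᵐ ω ∂μ, ∃ n, (X n ω, Y n ω) ∈ H

/-- Condition (BMC): every increasing sequence bounded above by some element converges. -/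
def BMC (E : Type*) [Preorder E] [TopologicalSpace E] : Prop :=
  ∀ (x : ℕ → E) (y : E), Monotone x → (∀ n, x n ≤ y) → ∃ l, Tendsto x atTop (nhds l)

/-- The ordered metric space `E` is *normal*: there is a continuous `h : [0,∞) → [0,∞)`
with `h 0 = 0` such that `x ⪯ y ⪯ z` implies `d(x,y) ≤ h (d(x,z))`. -/
def NormalOrdered (E : Type*) [PseudoMetricSpace E] [Preorder E] : Prop :=
  ∃ h : ℝ → ℝ, ContinuousOn h (Set.Ici 0) ∧ h 0 = 0 ∧ (∀ t ≥ (0 : ℝ), 0 ≤ h t) ∧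
    ∀ x y z : E, x ≤ y → y ≤ z → dist x y ≤ h (dist x z)

/-- Condition (PR): there are `x₀ ⪯ y₀` such that the hitting times
`ν⁻ = min {n ≥ 1 : Xₙ^{x₀} ⪰ x₀}` and `ν⁺ = min {n ≥ 1 : Xₙ^{y₀} ⪯ y₀}`
have finite expectations. -/
def PRCond {E : Type*} [MeasurableSpace E] [Preorder E] (P : Kernel E E) : Prop :=
  ∃ x₀ y₀ : E, x₀ ≤ y₀ ∧
    (∃ (Ω : Type) (_ : MeasurableSpace Ω) (μ : Measure Ω) (X : ℕ → Ω → E),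
      IsMChain P x₀ μ X ∧ (∀ᵐ ω ∂μ, ∃ n, 1 ≤ n ∧ x₀ ≤ X n ω) ∧
      Integrable (fun ω => ((sInf {n : ℕ | 1 ≤ n ∧ x₀ ≤ X n ω} : ℕ) : ℝ)) μ) ∧
    (∃ (Ω : Type) (_ : MeasurableSpace Ω) (μ : Measure Ω) (X : ℕ → Ω → E),
      IsMChain P y₀ μ X ∧ (∀ᵐ ω ∂μ, ∃ n, 1 ≤ n ∧ X n ω ≤ y₀) ∧
      Integrable (fun ω => ((sInf {n : ℕ | 1 ≤ n ∧ X n ω ≤ y₀} : ℕ) : ℝ)) μ)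

/-!
Uniqueness. If any two transition laws can be coupled so that the pair is ordered with probability
at least `c > 0`, then `P` contracts the oscillation of monotone functions by the factor `1 - c`.
Hence two invariant probability measures give the same mass to every Borel upper set, and on an
ordered Polish space these sets generate the Borel σ-algebra.

Counterexample. Stack copies `[0, 1] × {k}` of the interval at heights `3 ^ (1 - k)` for `k ≥ 1` and
at height `0` for `k = 0`, with the cone order `(s, k) ⪯ (t, l) ↔ |height k - height l| ≤ t - s`.
The chain maps `s` to `(s + j) / 3` with a uniform ternary digit `j` and moves from level `k ≥ 1` to
level `k + 1`, so that the heights contract at the same rate and every branch is monotone. The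
branch `j = 0` lies below the branch `j = 2`, so reversing the digits of the second chain orders the
pair as soon as the digit `0` occurs. Lebesgue measure on level `0` is stationary. For the order,
level `k` approaches level `0` as `k → ∞`, but topologically level `0` is isolated from the other
levels, so a chain started at level `1` stays away from it.
-/

section UpperSets

variable {α : Type*} [TopologicalSpace α] [PolishSpace α]

lemma analyticSet_image_of_isClosed_rel {β : Type*} [TopologicalSpace β] {s : Set β}
    (hs : AnalyticSet s) {r : Set (β × α)} (hr : IsClosed r) :
    AnalyticSet {y | ∃ x ∈ s, (x, y) ∈ r} := by
  obtain ⟨Z, _, _, g, hg, rfl⟩ := analyticSet_iff_exists_polishSpace_range.1 hs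
  have hclosed : IsClosed {p : Z × α | (g p.1, p.2) ∈ r} :=
    hr.preimage ((hg.comp continuous_fst).prodMk continuous_snd)
  convert hclosed.analyticSet.image_of_continuous continuous_snd using 1
  ext y
  simp

section Preorder

variable [Preorder α] [OrderClosedTopology α] {s t : Set α}

lemma analyticSet_upperClosure (hs : AnalyticSet s) :
    AnalyticSet (upperClosure s : Set α) :=
  analyticSet_image_of_isClosed_rel hs isClosed_le_prod

lemma analyticSet_lowerClosure (hs : AnalyticSet s) :
    AnalyticSet (lowerClosure s : Set α) :=
  analyticSet_image_of_isClosed_rel hs (isClosed_le continuous_snd continuous_fst)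

variable [MeasurableSpace α] [BorelSpace α]

lemma exists_measurableSet_upperClosure_subset (hs : MeasurableSet s) (ht : AnalyticSet t)
    (hst : Disjoint s (lowerClosure t)) :
    ∃ u, MeasurableSet u ∧ (upperClosure s : Set α) ⊆ u ∧ Disjoint u (lowerClosure t) := by
  have hdisj : Disjoint (upperClosure s : Set α) (lowerClosure t) := by
    rw [Set.disjoint_left] at hst ⊢
    rintro z ⟨x, hx, hxz⟩ hz
    exact hst hx ((lowerClosure t).lower hxz hz)
  obtain ⟨u, hsu, htu, hu⟩ := (analyticSet_upperClosure hs.analyticSet).measurablySeparable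
    (analyticSet_lowerClosure ht) hdisj
  exact ⟨u, hu, hsu, htu.symm⟩

/- The upper closure of a Borel set need not be Borel, so Lusin separation is iterated: each Borel
set of the sequence contains the upper closure of the previous one, and the union is upper. -/
theorem exists_measurableSet_isUpperSet_separating (hs : AnalyticSet s) (ht : AnalyticSet t)
    (hst : ∀ x ∈ s, ∀ y ∈ t, ¬ x ≤ y) :
    ∃ u, MeasurableSet u ∧ IsUpperSet u ∧ s ⊆ u ∧ Disjoint u t := by
  have hdisj : Disjoint s (lowerClosure t) :=
    Set.disjoint_left.2 fun x hx ⟨y, hy, hxy⟩ => hst x hx y hy hxy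
  obtain ⟨u₀, hsu₀, htu₀, hu₀⟩ := hs.measurablySeparable (analyticSet_lowerClosure ht) hdisj
  choose! next hnext_meas hnext_sub hnext_disj using fun u (hu : MeasurableSet u) =>
    exists_measurableSet_upperClosure_subset hu ht
  let u : ℕ → Set α := fun n => next^[n] u₀
  have hu_succ : ∀ n, u (n + 1) = next (u n) := fun n => Function.iterate_succ_apply' next n u₀
  have hu : ∀ n, MeasurableSet (u n) ∧ Disjoint (u n) (lowerClosure t) := by
    intro n
    induction n with
    | zero => exact ⟨hu₀, htu₀.symm⟩
    | succ n ih =>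
      rw [hu_succ]
      exact ⟨hnext_meas _ ih.1 ih.2, hnext_disj _ ih.1 ih.2⟩
  refine ⟨⋃ n, u n, .iUnion fun n => (hu n).1, ?_, hsu₀.trans (Set.subset_iUnion u 0), ?_⟩
  · intro x y hxy hx
    obtain ⟨n, hn⟩ := Set.mem_iUnion.1 hx
    refine Set.mem_iUnion.2 ⟨n + 1, hu_succ n ▸ hnext_sub _ (hu n).1 (hu n).2 ⟨x, hn, hxy⟩⟩
  · exact Set.disjoint_iUnion_left.2 fun n => (hu n).2.mono_right subset_lowerClosure

theorem exists_countable_upperSets_separating (α : Type*) [TopologicalSpace α] [PolishSpace α]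
    [MeasurableSpace α] [BorelSpace α] [Preorder α] [OrderClosedTopology α] :
    ∃ C : Set (Set α), C.Countable ∧ (∀ u ∈ C, MeasurableSet u ∧ IsUpperSet u) ∧
      ∀ x y, ¬ x ≤ y → ∃ u ∈ C, x ∈ u ∧ y ∉ u := by
  let B := TopologicalSpace.countableBasis α
  have hB : TopologicalSpace.IsTopologicalBasis B := TopologicalSpace.isBasis_countableBasis α
  have hanalytic : ∀ v ∈ B, AnalyticSet v := fun v hv => (hB.isOpen hv).measurableSet.analyticSet
  let I : Set (Set α × Set α) := {p ∈ B ×ˢ B | ∀ x ∈ p.1, ∀ y ∈ p.2, ¬ x ≤ y}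
  have hI : I.Countable :=
    ((TopologicalSpace.countable_countableBasis α).prod
      (TopologicalSpace.countable_countableBasis α)).mono (Set.sep_subset _ _)
  choose! sep hmeas hupper hleft hright using fun (p : Set α × Set α) (hp : p ∈ I) =>
    exists_measurableSet_isUpperSet_separating (hanalytic _ hp.1.1) (hanalytic _ hp.1.2) hp.2
  refine ⟨sep '' I, hI.image sep, Set.forall_mem_image.2 fun p hp => ⟨hmeas p hp, hupper p hp⟩,
    fun x y hxy => ?_⟩
  have hopen : IsOpen {p : α × α | ¬ p.1 ≤ p.2} := isClosed_le_prod.isOpen_compl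
  obtain ⟨_, ⟨v, hv, w, hw, rfl⟩, hmem, hsub⟩ :=
    (hB.prod hB).exists_subset_of_mem_open (show (x, y) ∈ _ from hxy) hopen
  have hvw : (v, w) ∈ I := ⟨⟨hv, hw⟩, fun a ha b hb => hsub (Set.mk_mem_prod ha hb)⟩
  exact ⟨sep (v, w), Set.mem_image_of_mem _ hvw, hleft _ hvw hmem.1,
    fun hy => Set.disjoint_left.1 (hright _ hvw) hy hmem.2⟩

end Preorder

theorem generateFrom_eq_of_countable_separating {β : Type*} [mβ : MeasurableSpace β]
    [StandardBorelSpace β] {C : Set (Set β)} (hC : C.Countable) (hmeas : ∀ u ∈ C, MeasurableSet u)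
    (hsep : ∀ x y, (∀ u ∈ C, x ∈ u ↔ y ∈ u) → x = y) :
    MeasurableSpace.generateFrom C = mβ := by
  have hle : MeasurableSpace.generateFrom C ≤ mβ := MeasurableSpace.generateFrom_le hmeas
  have hC_sep : @MeasurableSpace.CountablySeparated β (.generateFrom C) :=
    @MeasurableSpace.CountablySeparated.mk β (.generateFrom C)
      ⟨C, hC, fun u hu => .basic u hu, fun x _ y _ => hsep x y⟩
  obtain ⟨-, -, himage⟩ := @Measurable.measurableEmbedding β β (.generateFrom C) id hC_sep mβ _
    (measurable_id'' hle) Function.injective_id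
  exact le_antisymm hle fun s hs => by simpa using himage hs

section PartialOrder

variable [MeasurableSpace α] [BorelSpace α] [PartialOrder α] [OrderClosedTopology α]

theorem generateFrom_measurableSet_isUpperSet :
    MeasurableSpace.generateFrom {u : Set α | MeasurableSet u ∧ IsUpperSet u} =
      ‹MeasurableSpace α› := by
  obtain ⟨C, hC, hCupper, hsep⟩ := exists_countable_upperSets_separating α
  have hle : ∀ x y, (∀ u ∈ C, x ∈ u → y ∈ u) → x ≤ y := fun x y hxy => by
    by_contra hnle
    obtain ⟨u, hu, hxu, hyu⟩ := hsep x y hnle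
    exact hyu (hxy u hu hxu)
  have hgen := generateFrom_eq_of_countable_separating hC (fun u hu => (hCupper u hu).1)
    fun x y hxy => le_antisymm (hle x y fun u hu => (hxy u hu).1)
      (hle y x fun u hu => (hxy u hu).2)
  exact le_antisymm (MeasurableSpace.generateFrom_le fun u hu => hu.1)
    (hgen.ge.trans (MeasurableSpace.generateFrom_mono hCupper))

theorem StochDom.antisymm {μ ν : Measure α} [IsFiniteMeasure μ]
    (hμν : StochDom μ ν) (hνμ : StochDom ν μ) : μ = ν := by
  have heq : ∀ u, MeasurableSet u → IsUpperSet u → μ u = ν u := fun u hu hupper =>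
    le_antisymm (hμν u hu hupper) (hνμ u hu hupper)
  refine ext_of_generate_finite _ generateFrom_measurableSet_isUpperSet.symm ?_
    (fun u hu => heq u hu.1 hu.2) (heq _ .univ isUpperSet_univ)
  exact fun u hu v hv _ => ⟨hu.1.inter hv.1, hu.2.inter hv.2⟩

end PartialOrder

end UpperSets

section Splitting

variable {E : Type*} [MeasurableSpace E]

/-- Any two transition laws of `P` admit a coupling which puts mass at least `c` on the order. This
is a one-step, quantitative form of achievability of `{(x, y) | x ≤ y}`. -/
def OrderSplitting [Preorder E] (P : Kernel E E) (c : ℝ) : Prop :=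
  ∀ x y, ∃ γ : Measure (E × E), γ.map Prod.fst = P x ∧ γ.map Prod.snd = P y ∧
    c ≤ γ.real {p | p.1 ≤ p.2}

lemma StochDom.of_integral_le [Preorder E] {μ ν : Measure E} [IsFiniteMeasure μ]
    [IsFiniteMeasure ν] (h : ∀ g : E → ℝ, Measurable g → Monotone g →
      (∀ x, g x ∈ Set.Icc (0 : ℝ) 1) → ∫ x, g x ∂μ ≤ ∫ x, g x ∂ν) : StochDom μ ν := by
  intro I hI hupper
  have hmono : Monotone (I.indicator (1 : E → ℝ)) := fun x y hxy => by
    by_cases hx : x ∈ I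
    · simp [hx, hupper hxy hx]
    · simpa [hx] using Set.indicator_nonneg (by simp) y
  have hint := h _ (measurable_one.indicator hI) hmono fun x =>
    ⟨Set.indicator_nonneg (by simp) x, Set.indicator_le_self' (by simp) x⟩
  rw [integral_indicator_one hI, integral_indicator_one hI] at hint
  exact (ENNReal.toReal_le_toReal (measure_ne_top μ I) (measure_ne_top ν I)).1 hint

variable {P : Kernel E E} {c D : ℝ} {g : E → ℝ}

lemma integral_integral_of_invariant {π : Measure E} (hπ : P.Invariant π) (hg : Integrable g π) :
    ∫ x, ∫ y, g y ∂(P x) ∂π = ∫ x, g x ∂π := by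
  have hcomp : (P ∘ₖ Kernel.const Unit π) () = π := by
    rw [Kernel.comp_apply, Kernel.const_apply, hπ.def]
  rw [← hcomp] at hg
  simpa only [hcomp, Kernel.const_apply] using (Kernel.integral_comp hg).symm

lemma integral_sub_integral_le_of_forall_sub_le {μ ν : Measure E} [IsProbabilityMeasure μ]
    [IsProbabilityMeasure ν] (hμ : Integrable g μ) (hν : Integrable g ν)
    (hosc : ∀ x y, g x - g y ≤ D) : ∫ x, g x ∂μ - ∫ x, g x ∂ν ≤ D := by
  have hle : ∀ y, ∫ x, g x ∂μ ≤ g y + D := fun y => by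
    simpa using integral_mono hμ (integrable_const (g y + D)) fun x => by linarith [hosc x y]
  have hint := integral_mono (integrable_const _) (hν.add (integrable_const D)) hle
  simp only [Pi.add_apply, integral_const, probReal_univ, one_smul,
    integral_add hν (integrable_const D)] at hint
  linarith

variable [TopologicalSpace E] [BorelSpace E] [IsMarkovKernel P]

namespace OrderSplitting

section Preorder

variable [SecondCountableTopology E] [Preorder E] [OrderClosedTopology E]

lemma integral_sub_integral_le (hP : OrderSplitting P c) (hg : Measurable g) (hmono : Monotone g)
    (hg01 : ∀ x, g x ∈ Set.Icc (0 : ℝ) 1) (hosc : ∀ x y, g x - g y ≤ D) (x y : E) :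
    ∫ z, g z ∂(P x) - ∫ z, g z ∂(P y) ≤ (1 - c) * D := by
  obtain ⟨γ, hfst, hsnd, hc⟩ := hP x y
  have : IsProbabilityMeasure (γ.map Prod.fst) := hfst ▸ inferInstance
  have : IsProbabilityMeasure γ := Measure.isProbabilityMeasure_of_map Prod.fst
  have hM : MeasurableSet {p : E × E | p.1 ≤ p.2} := isClosed_le_prod.measurableSet
  have hD : 0 ≤ D := by simpa using hosc x x
  have hpoint : ∀ p : E × E, g p.1 - g p.2 ≤ {p : E × E | p.1 ≤ p.2}ᶜ.indicator (fun _ => D) p := by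
    intro p
    by_cases hp : p.1 ≤ p.2
    · simpa [hp] using hmono hp
    · simpa [hp] using hosc p.1 p.2
  have hint : ∀ f : E × E → E, Measurable f → Integrable (fun p => g (f p)) γ := fun f hf =>
    .of_mem_Icc 0 1 (hg.comp hf).aemeasurable (ae_of_all _ fun p => hg01 (f p))
  have hint_fst := hint _ measurable_fst
  have hint_snd := hint _ measurable_snd
  calc ∫ z, g z ∂(P x) - ∫ z, g z ∂(P y)
      = ∫ p, (g p.1 - g p.2) ∂γ := by
        rw [← hfst, ← hsnd, integral_map (by fun_prop) hg.aestronglyMeasurable,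
          integral_map (by fun_prop) hg.aestronglyMeasurable, integral_sub hint_fst hint_snd]
    _ ≤ ∫ p, {p : E × E | p.1 ≤ p.2}ᶜ.indicator (fun _ => D) p ∂γ :=
        integral_mono (hint_fst.sub hint_snd) ((integrable_const D).indicator hM.compl) hpoint
    _ = (1 - γ.real {p | p.1 ≤ p.2}) * D := by
        rw [integral_indicator_const _ hM.compl, probReal_compl_eq_one_sub hM, smul_eq_mul]
    _ ≤ (1 - c) * D := by gcongr

lemma integral_sub_integral_le_pow (hP : OrderSplitting P c) (hmonoP : MonotoneKernel P)
    {π π' : Measure E} [IsProbabilityMeasure π] [IsProbabilityMeasure π'] (hπ : P.Invariant π)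
    (hπ' : P.Invariant π') (hg : Measurable g) (hmono : Monotone g)
    (hg01 : ∀ x, g x ∈ Set.Icc (0 : ℝ) 1) (hosc : ∀ x y, g x - g y ≤ D) (n : ℕ) :
    ∫ x, g x ∂π - ∫ x, g x ∂π' ≤ (1 - c) ^ n * D := by
  have hint : ∀ (ρ : Measure E) [IsProbabilityMeasure ρ], Integrable g ρ := fun ρ _ =>
    .of_mem_Icc 0 1 hg.aemeasurable (ae_of_all _ hg01)
  induction n generalizing g D with
  | zero =>
    simpa using integral_sub_integral_le_of_forall_sub_le (hint π) (hint π') hosc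
  | succ n ih =>
    let Pg : E → ℝ := fun x => ∫ y, g y ∂(P x)
    have hPg : Measurable Pg := hg.stronglyMeasurable.integral_kernel.measurable
    have hPg01 : ∀ x, Pg x ∈ Set.Icc (0 : ℝ) 1 := fun x =>
      ⟨integral_nonneg fun y => (hg01 y).1, by
        simpa using integral_mono (hint (P x)) (integrable_const 1) fun y => (hg01 y).2⟩
    have hcontr := ih hPg (hmonoP g hg hmono hg01) hPg01
      (hP.integral_sub_integral_le hg hmono hg01 hosc)
      fun ρ _ => .of_mem_Icc 0 1 hPg.aemeasurable (ae_of_all _ hPg01)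
    rwa [integral_integral_of_invariant hπ (hint π), integral_integral_of_invariant hπ' (hint π'),
      ← mul_assoc, ← pow_succ] at hcontr

lemma stochDom_of_invariant (hP : OrderSplitting P c) (hc : 0 < c) (hmonoP : MonotoneKernel P)
    {π π' : Measure E} [IsProbabilityMeasure π] [IsProbabilityMeasure π'] (hπ : P.Invariant π)
    (hπ' : P.Invariant π') : StochDom π π' := by
  obtain ⟨x⟩ : Nonempty E := nonempty_of_isProbabilityMeasure π
  obtain ⟨γ, hfst, -, hcγ⟩ := hP x x
  have : IsProbabilityMeasure (γ.map Prod.fst) := hfst ▸ inferInstance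
  have : IsProbabilityMeasure γ := Measure.isProbabilityMeasure_of_map Prod.fst
  have hc1 : c ≤ 1 := hcγ.trans measureReal_le_one
  refine .of_integral_le fun g hg hmono hg01 => ?_
  have hosc : ∀ x y, g x - g y ≤ 1 := fun x y => by linarith [(hg01 x).2, (hg01 y).1]
  have hlim : Tendsto (fun n : ℕ => (1 - c) ^ n * 1) atTop (𝓝 (0 * 1)) :=
    (tendsto_pow_atTop_nhds_zero_of_lt_one (by linarith) (by linarith)).mul_const 1
  have hle := ge_of_tendsto' hlim
    (hP.integral_sub_integral_le_pow hmonoP hπ hπ' hg hmono hg01 hosc)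
  linarith

end Preorder

theorem eq_of_invariant [PolishSpace E] [PartialOrder E] [OrderClosedTopology E]
    (hP : OrderSplitting P c) (hc : 0 < c) (hmonoP : MonotoneKernel P) {π π' : Measure E}
    [IsProbabilityMeasure π] [IsProbabilityMeasure π'] (hπ : P.Invariant π)
    (hπ' : P.Invariant π') : π = π' :=
  (hP.stochDom_of_invariant hc hmonoP hπ hπ').antisymm
    (hP.stochDom_of_invariant hc hmonoP hπ' hπ)

end OrderSplitting

end Splitting

section RandomMap

variable {S B : Type*} [MeasurableSpace S] [MeasurableSpace B]

/-- Random mapping representation of a kernel: `F x`, applied to noise of law `ν`, has law `P x`. -/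
structure RandomMapRepr (P : Kernel S S) (ν : Measure B) (F : S → B → S) : Prop where
  measurable_uncurry : Measurable (Function.uncurry F)
  apply_eq : ∀ x, P x = ν.map (F x)

/-- The kernel of the random map `F` with noise of law `ν`. Meaningful only if `F` is jointly
measurable: otherwise `Kernel.map` returns `0`. -/
noncomputable def randomMapKernel (ν : Measure B) (F : S → B → S) : Kernel S S :=
  (Kernel.id ×ₖ Kernel.const S ν).map (Function.uncurry F)

/-- Two random maps run side by side with common noise. -/
def pairMap (F F' : S → B → S) (p : S × S) (b : B) : S × S := (F p.1 b, F' p.2 b)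

variable {P : Kernel S S} {ν : Measure B} {F F' : S → B → S}

lemma measurable_uncurry_pairMap (hF : Measurable (Function.uncurry F))
    (hF' : Measurable (Function.uncurry F')) : Measurable (Function.uncurry (pairMap F F')) :=
  (hF.comp (measurable_fst.fst.prodMk measurable_snd)).prodMk
    (hF'.comp (measurable_fst.snd.prodMk measurable_snd))

lemma randomMapRepr_randomMapKernel [SFinite ν] (hF : Measurable (Function.uncurry F)) :
    RandomMapRepr (randomMapKernel ν F) ν F where
  measurable_uncurry := hF
  apply_eq x := by
    rw [randomMapKernel, Kernel.map_apply _ hF, Kernel.prod_apply, Kernel.id_apply,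
      Kernel.const_apply, Measure.dirac_prod, Measure.map_map hF measurable_prodMk_left]
    rfl

namespace RandomMapRepr

lemma measurable (hF : RandomMapRepr P ν F) (x : S) : Measurable (F x) :=
  hF.measurable_uncurry.comp measurable_prodMk_left

lemma isMarkovKernel [IsProbabilityMeasure ν] (hF : RandomMapRepr P ν F) : IsMarkovKernel P :=
  ⟨fun x => hF.apply_eq x ▸ Measure.isProbabilityMeasure_map (hF.measurable x).aemeasurable⟩

lemma comp_measurePreserving {T : B → B} (hF : RandomMapRepr P ν F)
    (hT : MeasurePreserving T ν ν) : RandomMapRepr P ν fun x b => F x (T b) where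
  measurable_uncurry :=
    hF.measurable_uncurry.comp (measurable_fst.prodMk (hT.measurable.comp measurable_snd))
  apply_eq x := by
    rw [hF.apply_eq x, ← hT.map_eq, Measure.map_map (hF.measurable x) hT.measurable, hT.map_eq]
    rfl

lemma bind_eq_map_prod [SFinite ν] (hF : RandomMapRepr P ν F) (π : Measure S) :
    π.bind P = (π.prod ν).map (Function.uncurry F) := by
  ext A hA
  rw [Measure.bind_apply hA P.aemeasurable, Measure.map_apply hF.measurable_uncurry hA,
    Measure.prod_apply (hF.measurable_uncurry hA)]
  refine lintegral_congr fun x => ?_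
  rw [hF.apply_eq x, Measure.map_apply (hF.measurable x) hA]
  rfl

lemma monotoneKernel [Preorder S] [IsFiniteMeasure ν] (hF : RandomMapRepr P ν F)
    (hmono : ∀ b, Monotone fun x => F x b) : MonotoneKernel P := by
  intro g hg hg_mono hg01 x y hxy
  have hint : ∀ x, Integrable (fun b => g (F x b)) ν := fun x =>
    .of_mem_Icc 0 1 (hg.comp (hF.measurable x)).aemeasurable (ae_of_all _ fun b => hg01 (F x b))
  simp only [hF.apply_eq, integral_map (hF.measurable _).aemeasurable hg.aestronglyMeasurable]
  exact integral_mono (hint x) (hint y) fun b => hg_mono (hmono b hxy)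

lemma orderSplitting [Preorder S] [IsFiniteMeasure ν] (hF : RandomMapRepr P ν F)
    (hF' : RandomMapRepr P ν F') {s : Set B} (hs : ∀ b ∈ s, ∀ x y, F x b ≤ F' y b) :
    OrderSplitting P (ν.real s) := by
  intro x y
  have hmeas : Measurable fun b => (F x b, F' y b) := (hF.measurable x).prodMk (hF'.measurable y)
  refine ⟨ν.map fun b => (F x b, F' y b), ?_, ?_, ?_⟩
  · rw [Measure.map_map measurable_fst hmeas, hF.apply_eq]
    rfl
  · rw [Measure.map_map measurable_snd hmeas, hF'.apply_eq]
    rfl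
  · exact ENNReal.toReal_mono (measure_ne_top _ _)
      ((measure_mono fun b hb => hs b hb x y).trans (Measure.le_map_apply hmeas.aemeasurable _))

end RandomMapRepr

end RandomMap

lemma invariant_map_of_semiconj {S T : Type*} [MeasurableSpace S] [MeasurableSpace T]
    {P : Kernel S S} {Q : Kernel T T} {e : T → S} (he : Measurable e)
    (hsemi : ∀ t, P (e t) = (Q t).map e) {ρ : Measure T} (hρ : Q.Invariant ρ) :
    P.Invariant (ρ.map e) := by
  have hcomap : P.comap e he = Q.map e := by
    ext1 t
    rw [Kernel.comap_apply, Kernel.map_apply _ he, hsemi]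
  rw [Kernel.Invariant, ← Measure.deterministic_comp_eq_map he, Measure.comp_assoc,
    Kernel.comp_deterministic_eq_comap, hcomap, ← Measure.map_comp _ _ he, hρ.def,
    Measure.deterministic_comp_eq_map]

section DrivenChain

variable {Ω S B : Type*}

/-- The process `Z₀ = z`, `Zₙ₊₁ = F Zₙ ξₙ` obtained by iterating a random map `F` along the noise
sequence `ξ`. -/
def drivenChain (F : S → B → S) (z : S) (ξ : ℕ → Ω → B) : ℕ → Ω → S
  | 0, _ => z
  | n + 1, ω => F (drivenChain F z ξ n ω) (ξ n ω)

variable {F F' : S → B → S} {ξ : ℕ → Ω → B}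

lemma drivenChain_pairMap (x y : S) : drivenChain (pairMap F F') (x, y) ξ =
    fun n ω => (drivenChain F x ξ n ω, drivenChain F' y ξ n ω) := by
  ext1 n
  induction n with
  | zero => rfl
  | succ n ih => simp only [drivenChain, ih, pairMap]

variable [MeasurableSpace S] [MeasurableSpace B]

lemma measurable_drivenChain_iSup_comap (hF : Measurable (Function.uncurry F)) (z : S)
    (ξ : ℕ → Ω → B) (n : ℕ) :
    Measurable[⨆ i ∈ Set.Iio n, MeasurableSpace.comap (ξ i) ‹_›] (drivenChain F z ξ n) := by
  induction n with
  | zero => exact measurable_const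
  | succ n ih =>
    have hchain := ih.mono (biSup_mono fun i hi => Set.Iio_subset_Iio n.le_succ hi) le_rfl
    have hξ := (comap_measurable (ξ n)).mono
      (le_biSup (fun i => MeasurableSpace.comap (ξ i) ‹_›) (Set.mem_Iio.2 n.lt_succ_self)) le_rfl
    exact hF.comp (hchain.prodMk hξ)

variable [MeasurableSpace Ω] {μ : Measure Ω} {P : Kernel S S} {ν : Measure B}

lemma measurable_drivenChain (hF : Measurable (Function.uncurry F)) (z : S)
    (hξ : ∀ n, Measurable (ξ n)) (n : ℕ) : Measurable (drivenChain F z ξ n) :=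
  (measurable_drivenChain_iSup_comap hF z ξ n).mono (iSup₂_le fun i _ => (hξ i).comap_le) le_rfl

lemma indepFun_drivenChain (hF : Measurable (Function.uncurry F)) (z : S)
    (hξ : ∀ n, Measurable (ξ n)) (hindep : iIndepFun ξ μ) (n : ℕ) :
    IndepFun (fun ω (i : Fin (n + 1)) => drivenChain F z ξ i ω) (ξ n) μ := by
  have hpast : Measurable[⨆ i ∈ Set.Iio n, MeasurableSpace.comap (ξ i) ‹_›]
      fun ω (i : Fin (n + 1)) => drivenChain F z ξ i ω :=
    @measurable_pi_lambda _ _ _ (_) _ _ fun i =>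
      (measurable_drivenChain_iSup_comap hF z ξ i).mono
        (biSup_mono fun j hj => hj.trans_le (Nat.lt_succ_iff.1 i.2)) le_rfl
  have hsup := indep_iSup_of_disjoint (fun i => (hξ i).comap_le) hindep.iIndep
    (Set.disjoint_singleton_right.2 (Set.self_notMem_Iio (a := n)))
  refine indep_of_indep_of_le_left ?_ hpast.comap_le
  simpa using hsup

lemma integral_comp_prodMk_of_indepFun {T : Type*} [MeasurableSpace T] {X : Ω → T} {Y : Ω → B}
    [IsFiniteMeasure μ] (hX : Measurable X) (hY : Measurable Y) (hXY : IndepFun X Y μ)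
    {f : T × B → ℝ} (hf : Integrable f ((μ.map X).prod (μ.map Y))) :
    ∫ ω, f (X ω, Y ω) ∂μ = ∫ ω, ∫ b, f (X ω, b) ∂(μ.map Y) ∂μ := by
  have hlaw := (indepFun_iff_map_prod_eq_prod_map_map hX.aemeasurable hY.aemeasurable).1 hXY
  rw [← integral_map (hX.prodMk hY).aemeasurable (hlaw ▸ hf.aestronglyMeasurable), hlaw,
    integral_prod f hf, integral_map hX.aemeasurable hf.integral_prod_left.aestronglyMeasurable]

lemma RandomMapRepr.integral_indicator_comp (hP : RandomMapRepr P ν F) {A : Set S}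
    (hA : MeasurableSet A) (x : S) :
    ∫ b, A.indicator (fun _ => (1 : ℝ)) (F x b) ∂ν = (P x A).toReal := by
  rw [hP.apply_eq, ← measureReal_def, ← integral_indicator_one hA,
    integral_map (hP.measurable x).aemeasurable (measurable_one.indicator hA).aestronglyMeasurable]
  rfl

theorem RandomMapRepr.mcStep_of_indepFun [IsProbabilityMeasure μ] (hP : RandomMapRepr P ν F)
    {Z : ℕ → Ω → S} (hZ : ∀ n, Measurable (Z n)) (hξ : ∀ n, Measurable (ξ n))
    (hlaw : ∀ n, μ.map (ξ n) = ν) (hstep : ∀ n ω, Z (n + 1) ω = F (Z n ω) (ξ n ω))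
    (hindep : ∀ n, IndepFun (fun ω (i : Fin (n + 1)) => Z i ω) (ξ n) μ) :
    MCStep μ (fun _ => P) Z := by
  intro n A hA φ hφ hφ01
  have hpast : Measurable fun ω (i : Fin (n + 1)) => Z i ω := by fun_prop
  let f : (Fin (n + 1) → S) × B → ℝ := fun p =>
    φ p.1 * A.indicator (fun _ => (1 : ℝ)) (F (p.1 (Fin.last n)) p.2)
  have hf : Measurable f := by
    have hlast : Measurable fun p : (Fin (n + 1) → S) × B => (p.1 (Fin.last n), p.2) := by
      fun_prop
    exact (hφ.comp measurable_fst).mul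
      ((measurable_const.indicator hA).comp (hP.measurable_uncurry.comp hlast))
  have hf01 : ∀ p, f p ∈ Set.Icc (0 : ℝ) 1 := fun p => by
    have hind : A.indicator (fun _ => (1 : ℝ)) (F (p.1 (Fin.last n)) p.2) ∈ Set.Icc (0 : ℝ) 1 :=
      ⟨Set.indicator_nonneg (by simp) _, Set.indicator_le_self' (by simp) _⟩
    exact unitInterval.mul_mem (hφ01 p.1) hind
  have : IsProbabilityMeasure (μ.map (ξ n)) :=
    Measure.isProbabilityMeasure_map (hξ n).aemeasurable
  have hint : ∀ v : Fin (n + 1) → S,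
      ∫ b, f (v, b) ∂(μ.map (ξ n)) = φ v * (P (v (Fin.last n)) A).toReal := fun v => by
    simp only [f, integral_const_mul, hlaw, hP.integral_indicator_comp hA]
  calc ∫ ω, φ (fun i => Z i ω) * A.indicator (fun _ => (1 : ℝ)) (Z (n + 1) ω) ∂μ
      = ∫ ω, f (fun i => Z i ω, ξ n ω) ∂μ := by simp only [f, hstep, Fin.val_last]
    _ = ∫ ω, ∫ b, f (fun i => Z i ω, b) ∂(μ.map (ξ n)) ∂μ :=
        integral_comp_prodMk_of_indepFun hpast (hξ n) (hindep n)
          (.of_mem_Icc 0 1 hf.aemeasurable (ae_of_all _ hf01))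
    _ = ∫ ω, φ (fun i => Z i ω) * (P (Z n ω) A).toReal ∂μ := by simp only [hint, Fin.val_last]

theorem RandomMapRepr.isMChain_drivenChain [IsProbabilityMeasure μ] (hP : RandomMapRepr P ν F)
    (z : S) (hξ : ∀ n, Measurable (ξ n)) (hlaw : ∀ n, μ.map (ξ n) = ν)
    (hindep : iIndepFun ξ μ) : IsMChain P z μ (drivenChain F z ξ) :=
  have hZ := measurable_drivenChain hP.measurable_uncurry z hξ
  ⟨inferInstance, hZ, ae_of_all _ fun _ => rfl,
    hP.mcStep_of_indepFun hZ hξ hlaw (fun _ _ => rfl)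
      (indepFun_drivenChain hP.measurable_uncurry z hξ hindep)⟩

lemma ae_exists_mem_of_iIndepFun (hξ : ∀ n, Measurable (ξ n)) (hlaw : ∀ n, μ.map (ξ n) = ν)
    (hindep : iIndepFun ξ μ) {s : Set B} (hs : MeasurableSet s) (hνs : ν s ≠ 0) :
    ∀ᵐ ω ∂μ, ∃ n, ξ n ω ∈ s := by
  have := hindep.isProbabilityMeasure
  have hmeas : ∀ n, MeasurableSet (ξ n ⁻¹' s) := fun n => hξ n hs
  have hsum : ∑' n, μ (ξ n ⁻¹' s) = ⊤ := by
    simp only [← Measure.map_apply (hξ _) hs, hlaw]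
    exact ENNReal.tsum_const_eq_top_of_ne_zero hνs
  have hindep_set : iIndepSet (fun n => ξ n ⁻¹' s) μ :=
    (iIndepSet_iff_meas_biInter hmeas).2 fun t =>
      hindep.measure_inter_preimage_eq_mul t fun _ _ => hs
  have hlimsup := (mem_ae_iff_prob_eq_one (.measurableSet_limsup hmeas)).2
    (measure_limsup_eq_one hmeas hindep_set hsum)
  filter_upwards [hlimsup] with ω hω
  exact (mem_limsup_iff_frequently_mem.1 hω).exists

end DrivenChain

theorem RandomMapRepr.achievable {S : Type*} {B : Type} [MeasurableSpace S] [MeasurableSpace B]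
    {P : Kernel S S} {ν : Measure B} [IsProbabilityMeasure ν] {F F' : S → B → S}
    (hF : RandomMapRepr P ν F) (hF' : RandomMapRepr P ν F') {s : Set B} (hs : MeasurableSet s)
    (hνs : ν s ≠ 0) {H : Set (S × S)} (hH : ∀ b ∈ s, ∀ x y, (F x b, F' y b) ∈ H) :
    Achievable P H := by
  intro x y
  let μ : Measure (ℕ → B) := Measure.infinitePi fun _ => ν
  let ξ : ℕ → (ℕ → B) → B := fun n ω => ω n
  have hξ : ∀ n, Measurable (ξ n) := measurable_pi_apply
  have hlaw : ∀ n, μ.map (ξ n) = ν := Measure.infinitePi_map_eval _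
  have hindep : iIndepFun ξ μ := iIndepFun_infinitePi fun _ => measurable_id
  have hpair := randomMapRepr_randomMapKernel (ν := ν)
    (measurable_uncurry_pairMap hF.measurable_uncurry hF'.measurable_uncurry)
  refine ⟨ℕ → B, inferInstance, μ, drivenChain F x ξ, drivenChain F' y ξ,
    ⟨hF.isMChain_drivenChain x hξ hlaw hindep, hF'.isMChain_drivenChain y hξ hlaw hindep,
      fun _ => randomMapKernel ν (pairMap F F'), fun _ => hpair.isMarkovKernel, ?_⟩, ?_⟩
  · rw [← drivenChain_pairMap]
    exact (hpair.isMChain_drivenChain (x, y) hξ hlaw hindep).2.2.2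
  · filter_upwards [ae_exists_mem_of_iIndepFun hξ hlaw hindep hs hνs] with ω ⟨n, hn⟩
    exact ⟨n + 1, hH _ hn _ _⟩

section UniformOnUniv

variable {ι : Type*} [MeasurableSpace ι] [MeasurableSingletonClass ι]

lemma integral_uniformOn_univ [Fintype ι] (f : ι → ℝ) :
    ∫ j, f j ∂(uniformOn Set.univ) = (∑ j, f j) / Fintype.card ι := by
  rw [uniformOn, ProbabilityTheory.cond, Measure.restrict_univ, integral_smul_measure,
    integral_count]
  simp [div_eq_inv_mul]

lemma measurePreserving_uniformOn_univ [Finite ι] (e : ι ≃ ι) :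
    MeasurePreserving e (uniformOn Set.univ) (uniformOn Set.univ) := by
  cases nonempty_fintype ι
  refine ⟨measurable_of_finite e, Measure.ext_of_singleton fun i => ?_⟩
  rw [Measure.map_apply (measurable_of_finite e) (measurableSet_singleton i),
    ← Equiv.image_symm_eq_preimage, Set.image_singleton]
  simp only [uniformOn_univ, Measure.count_singleton]

end UniformOnUniv

section Digits

variable {n : ℕ}

/-- The `j`-th inverse branch `s ↦ (s + j) / n` of the map `s ↦ n s mod 1` on the unit interval. It
prepends the digit `j` to the base-`n` expansion of `s`. -/
noncomputable def digitMap (s : unitInterval) (j : Fin n) : unitInterval :=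
  ⟨(s + (j : ℕ)) / n, by
    have hn : (0 : ℝ) < n := Nat.cast_pos.2 (Fin.pos j)
    have hj : ((j : ℕ) : ℝ) + 1 ≤ n := by exact_mod_cast j.is_lt
    have := s.2.1
    have := s.2.2
    exact ⟨by positivity, (div_le_one hn).2 (by linarith)⟩⟩

lemma coe_digitMap (s : unitInterval) (j : Fin n) : (digitMap s j : ℝ) = (s + (j : ℕ)) / n := rfl

lemma continuous_digitMap (j : Fin n) : Continuous fun s => digitMap s j :=
  .subtype_mk (by fun_prop) _

lemma measurable_uncurry_digitMap :
    Measurable (Function.uncurry (digitMap : unitInterval → Fin n → unitInterval)) :=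
  measurable_from_prod_countable_left fun j => (continuous_digitMap j).measurable

lemma integral_unitInterval_eq {f : unitInterval → ℝ} {g : ℝ → ℝ} (hfg : ∀ s, f s = g s) :
    ∫ s, f s = ∫ r in (0 : ℝ)..1, g r := by
  rw [intervalIntegral.integral_of_le zero_le_one, ← integral_Icc_eq_integral_Ioc,
    ← integral_subtype measurableSet_Icc]
  exact integral_congr_ae (ae_of_all _ hfg)

lemma integral_average_digitMap [NeZero n] {g : unitInterval → ℝ} (hg : Continuous g) :
    ∫ s, (∑ j : Fin n, g (digitMap s j)) / n = ∫ s, g s := by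
  have hn : (n : ℝ) ≠ 0 := NeZero.ne _
  let h : ℝ → ℝ := Set.IccExtend zero_le_one g
  have hh : Continuous h := hg.Icc_extend'
  have hgh : ∀ s : unitInterval, g s = h s := fun s => (Set.IccExtend_val _ g s).symm
  have hbranch : ∀ j : Fin n, ∫ r in (0 : ℝ)..1, h (r / n + (j : ℕ) / n) =
      n * ∫ r in ((j : ℕ) : ℝ) / n..((j + 1 : ℕ) : ℝ) / n, h r := fun j => by
    rw [intervalIntegral.integral_comp_div_add h hn, smul_eq_mul]
    congr 2 <;> push_cast <;> ring
  calc ∫ s, (∑ j : Fin n, g (digitMap s j)) / n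
      = ∫ r in (0 : ℝ)..1, (∑ j : Fin n, h (r / n + (j : ℕ) / n)) / n :=
        integral_unitInterval_eq fun s => by simp only [hgh, coe_digitMap, add_div]
    _ = (∑ j : Fin n, ∫ r in (0 : ℝ)..1, h (r / n + (j : ℕ) / n)) / n := by
        rw [intervalIntegral.integral_div, intervalIntegral.integral_finsetSum]
        exact fun j _ => (hh.comp (by fun_prop)).intervalIntegrable _ _
    _ = ∑ j : Fin n, ∫ r in ((j : ℕ) : ℝ) / n..((j + 1 : ℕ) : ℝ) / n, h r := by
        simp only [hbranch, ← Finset.mul_sum, mul_div_cancel_left₀ _ hn]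
    _ = ∫ r in (0 : ℝ)..1, h r := by
        rw [← Finset.sum_range fun k => ∫ r in (k : ℝ) / n..((k + 1 : ℕ) : ℝ) / n, h r,
          intervalIntegral.sum_integral_adjacent_intervals (a := fun k : ℕ => (k : ℝ) / n)
            fun k _ => hh.intervalIntegrable _ _]
        simp only [CharP.cast_eq_zero, zero_div, div_self hn]
    _ = ∫ s, g s := (integral_unitInterval_eq hgh).symm

theorem RandomMapRepr.invariant_volume_of_digitMap [NeZero n] {Q : Kernel unitInterval unitInterval}
    (hQ : RandomMapRepr Q (uniformOn (Set.univ : Set (Fin n))) digitMap) :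
    Q.Invariant volume := by
  have := hQ.isMarkovKernel
  rw [Kernel.Invariant, hQ.bind_eq_map_prod]
  have hmeas := hQ.measurable_uncurry
  have := Measure.isProbabilityMeasure_map (μ := volume.prod (uniformOn (Set.univ : Set (Fin n))))
    hmeas.aemeasurable
  refine ext_of_forall_integral_eq_of_IsFiniteMeasure fun g => ?_
  have hint : Integrable (fun p : unitInterval × Fin n => g (Function.uncurry digitMap p))
      (volume.prod (uniformOn Set.univ)) :=
    .of_bound (g.continuous.measurable.comp hmeas).aestronglyMeasurable ‖g‖
      (ae_of_all _ fun _ => g.norm_coe_le_norm _)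
  rw [integral_map hmeas.aemeasurable g.continuous.aestronglyMeasurable, integral_prod _ hint]
  simp only [Function.uncurry_apply_pair, integral_uniformOn_univ, Fintype.card_fin]
  exact integral_average_digitMap g.continuous

end Digits

section Absorbing

variable {S : Type*} [MeasurableSpace S] {s : Set S}

instance isMarkovKernel_kpow (P : Kernel S S) [IsMarkovKernel P] (n : ℕ) :
    IsMarkovKernel (kpow P n) := by
  induction n with
  | zero => rw [kpow]; infer_instance
  | succ n ih => rw [kpow]; infer_instance

lemma kpow_apply_compl_eq_zero {P : Kernel S S} (hs : MeasurableSet s)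
    (habs : ∀ x ∈ s, P x sᶜ = 0) {y : S} (hy : y ∈ s) (n : ℕ) : kpow P n y sᶜ = 0 := by
  induction n with
  | zero => simpa [kpow, Kernel.id_apply, hs.compl] using hy
  | succ n ih =>
    rw [kpow, Kernel.comp_apply' _ _ _ hs.compl, lintegral_eq_zero_iff (P.measurable_coe hs.compl)]
    filter_upwards [measure_eq_zero_iff_ae_notMem.1 ih] with x hx
    exact habs x (not_not.1 hx)

lemma exists_not_tendsto_integral_of_isClopen [TopologicalSpace S] [OpensMeasurableSpace S]
    {μ : ℕ → Measure S} [∀ n, IsProbabilityMeasure (μ n)] {π : Measure S} (hs : IsClopen s)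
    (hμ : ∀ n, μ n sᶜ = 0) (hπ : π s = 0) :
    ∃ g : BoundedContinuousFunction S ℝ,
      ¬ Tendsto (fun n => ∫ x, g x ∂(μ n)) atTop (𝓝 (∫ x, g x ∂π)) := by
  have hmeas : MeasurableSet s := hs.isOpen.measurableSet
  have hint : ∀ ρ : Measure S, ∫ x, BoundedContinuousFunction.indicator s hs x ∂ρ = ρ.real s :=
    fun ρ => integral_indicator_one hmeas
  have hone : ∀ n, (μ n).real s = 1 := fun n => by
    rw [measureReal_def, (prob_compl_eq_zero_iff hmeas).1 (hμ n), ENNReal.toReal_one]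
  have hzero : π.real s = 0 := by rw [measureReal_def, hπ, ENNReal.toReal_zero]
  refine ⟨.indicator s hs, ?_⟩
  simp only [hint, hone, hzero, tendsto_const_nhds_iff, one_ne_zero, not_false_eq_true]

end Absorbing

/-- The state space of the counterexample: `[0, 1] × ℕ`, where `ℕ` is discrete. Every level
`[0, 1] × {k}` is open and closed, but for the order defined below the levels `k → ∞` approach
level `0`. -/
def LevelSpace : Type := unitInterval × ℕ

namespace LevelSpace

noncomputable instance : MetricSpace LevelSpace := inferInstanceAs (MetricSpace (unitInterval × ℕ))
instance : PolishSpace LevelSpace := inferInstanceAs (PolishSpace (unitInterval × ℕ))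
instance : MeasurableSpace LevelSpace := inferInstanceAs (MeasurableSpace (unitInterval × ℕ))
instance : BorelSpace LevelSpace := inferInstanceAs (BorelSpace (unitInterval × ℕ))

/-- Height at which the level `k` of `LevelSpace` is placed above the interval: it tends to `0` as
`k → ∞`, while level `0` has height exactly `0`. -/
noncomputable def height : ℕ → ℝ
  | 0 => 0
  | k + 1 => (1 / 3) ^ k

/-- The level reached from level `k` in one step. -/
def nextLevel : ℕ → ℕ
  | 0 => 0
  | k + 1 => k + 2

lemma height_nextLevel (k : ℕ) : height (nextLevel k) = height k / 3 := by
  cases k with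
  | zero => simp [height, nextLevel]
  | succ k => simp only [height, nextLevel, pow_succ]; ring

lemma height_mem_Icc (k : ℕ) : height k ∈ Set.Icc (0 : ℝ) 1 := by
  cases k with
  | zero => simp [height]
  | succ k => exact ⟨by simp only [height]; positivity, pow_le_one₀ (by norm_num) (by norm_num)⟩

lemma height_injective : Function.Injective height := by
  have hpos : ∀ k, (0 : ℝ) < (1 / 3) ^ k := fun k => by positivity
  rintro (_ | k) (_ | l) h
  · rfl
  · exact absurd h (hpos l).ne
  · exact absurd h (hpos k).ne'
  · exact congrArg _ (pow_right_injective₀ (by norm_num) (by norm_num) h)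

/-- The coordinates of the point `(s, height k)` of the plane along the boundary of the cone
`|h| ≤ s`. The order of `LevelSpace` is the pullback of the product order, so that
`(s, k) ≤ (t, l)` means `|height l - height k| ≤ t - s`. -/
noncomputable def coords (x : LevelSpace) : ℝ × ℝ := (x.1 + height x.2, x.1 - height x.2)

lemma coords_injective : Function.Injective coords := by
  intro x y h
  obtain ⟨hadd, hsub⟩ := Prod.ext_iff.1 h
  simp only [coords] at hadd hsub
  exact Prod.ext (Subtype.ext (by linarith)) (height_injective (by linarith))

noncomputable instance : PartialOrder LevelSpace := PartialOrder.lift coords coords_injective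

lemma le_iff_coords_le {x y : LevelSpace} : x ≤ y ↔ coords x ≤ coords y := Iff.rfl

lemma continuous_coords : Continuous coords := by
  have hfst : Continuous fun x : LevelSpace => (x.1 : ℝ) :=
    continuous_subtype_val.comp (continuous_fst (X := unitInterval) (Y := ℕ))
  have hsnd : Continuous fun x : LevelSpace => height x.2 :=
    (continuous_of_discreteTopology (f := height)).comp
      (continuous_snd (X := unitInterval) (Y := ℕ))
  exact (hfst.add hsnd).prodMk (hfst.sub hsnd)

instance : OrderClosedTopology LevelSpace where
  isClosed_le' := isClosed_le (f := fun p : LevelSpace × LevelSpace => coords p.1)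
    (g := fun p => coords p.2) (continuous_coords.comp continuous_fst)
    (continuous_coords.comp continuous_snd)

/-- One step of the chain: contract the interval by a ternary digit and move to the next level. -/
noncomputable def randomMap (x : LevelSpace) (j : Fin 3) : LevelSpace :=
  (digitMap x.1 j, nextLevel x.2)

lemma coords_randomMap (x : LevelSpace) (j : Fin 3) : coords (randomMap x j) =
    (((coords x).1 + (j : ℕ)) / 3, ((coords x).2 + (j : ℕ)) / 3) := by
  simp only [coords, randomMap, coe_digitMap, height_nextLevel]
  ext <;> push_cast <;> ring

lemma monotone_randomMap (j : Fin 3) : Monotone fun x => randomMap x j := by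
  intro x y hxy
  obtain ⟨hfst, hsnd⟩ := le_iff_coords_le.1 hxy
  rw [le_iff_coords_le, coords_randomMap, coords_randomMap, Prod.mk_le_mk]
  constructor <;> linarith

lemma coords_mem_Icc (x : LevelSpace) : coords x ∈ Set.Icc ((0, -1) : ℝ × ℝ) (2, 1) := by
  obtain ⟨hs₀, hs₁⟩ := x.1.2
  obtain ⟨hh₀, hh₁⟩ := height_mem_Icc x.2
  refine ⟨⟨?_, ?_⟩, ⟨?_, ?_⟩⟩ <;> simp only [coords] <;> linarith

lemma randomMap_zero_le_randomMap_two (x y : LevelSpace) : randomMap x 0 ≤ randomMap y 2 := by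
  obtain ⟨-, hx₁, hx₂⟩ := coords_mem_Icc x
  obtain ⟨⟨hy₁, hy₂⟩, -⟩ := coords_mem_Icc y
  rw [le_iff_coords_le, coords_randomMap, coords_randomMap]
  simp only [Fin.val_zero, Fin.val_two, Nat.cast_zero, Nat.cast_ofNat, Prod.mk_le_mk]
  constructor <;> linarith

lemma measurable_uncurry_randomMap : Measurable (Function.uncurry randomMap) :=
  measurable_from_prod_countable_left fun j => by
    have hfst : Measurable fun x : LevelSpace => digitMap x.1 j :=
      (continuous_digitMap j).measurable.comp (measurable_fst (α := unitInterval) (β := ℕ))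
    have hsnd : Measurable fun x : LevelSpace => nextLevel x.2 :=
      (measurable_of_countable nextLevel).comp (measurable_snd (α := unitInterval) (β := ℕ))
    exact hfst.prodMk hsnd

/-- The transition kernel of the counterexample. -/
noncomputable def kernel : Kernel LevelSpace LevelSpace :=
  randomMapKernel (uniformOn Set.univ) randomMap

lemma randomMapRepr_kernel : RandomMapRepr kernel (uniformOn Set.univ) randomMap :=
  randomMapRepr_randomMapKernel measurable_uncurry_randomMap

lemma randomMapRepr_kernel_rev :
    RandomMapRepr kernel (uniformOn Set.univ) fun x (j : Fin 3) => randomMap x j.rev :=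
  randomMapRepr_kernel.comp_measurePreserving (measurePreserving_uniformOn_univ Fin.revPerm)

instance : IsMarkovKernel kernel := randomMapRepr_kernel.isMarkovKernel

lemma monotoneKernel_kernel : MonotoneKernel kernel :=
  randomMapRepr_kernel.monotoneKernel monotone_randomMap

lemma randomMap_le_randomMap_rev : ∀ j ∈ ({0} : Set (Fin 3)), ∀ x y : LevelSpace,
    randomMap x j ≤ randomMap y j.rev := by
  rintro _ rfl x y
  exact randomMap_zero_le_randomMap_two x y

lemma uniformOn_univ_singleton_zero_ne_zero : uniformOn (Set.univ : Set (Fin 3)) {0} ≠ 0 := by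
  simp [uniformOn_univ]

lemma orderSplitting_kernel :
    OrderSplitting kernel ((uniformOn (Set.univ : Set (Fin 3))).real {0}) :=
  randomMapRepr_kernel.orderSplitting randomMapRepr_kernel_rev randomMap_le_randomMap_rev

lemma achievable_kernel : Achievable kernel {p | p.1 ≤ p.2} :=
  randomMapRepr_kernel.achievable randomMapRepr_kernel_rev (measurableSet_singleton 0)
    uniformOn_univ_singleton_zero_ne_zero randomMap_le_randomMap_rev

lemma kernel_apply (x : LevelSpace) : kernel x = (uniformOn Set.univ).map (randomMap x) :=
  randomMapRepr_kernel.apply_eq x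

/-- The inclusion of the interval as level `0`. -/
def levelZero (s : unitInterval) : LevelSpace := (s, 0)

lemma measurable_levelZero : Measurable levelZero := measurable_id.prodMk measurable_const

/-- The stationary distribution of the counterexample: Lebesgue measure on level `0`. -/
noncomputable def stationary : Measure LevelSpace :=
  (volume : Measure unitInterval).map levelZero

instance : IsProbabilityMeasure stationary :=
  Measure.isProbabilityMeasure_map measurable_levelZero.aemeasurable

lemma invariant_stationary : kernel.Invariant stationary := by
  let Q : Kernel unitInterval unitInterval :=
    randomMapKernel (uniformOn (Set.univ : Set (Fin 3))) digitMap
  have hQ : RandomMapRepr Q (uniformOn Set.univ) digitMap :=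
    randomMapRepr_randomMapKernel measurable_uncurry_digitMap
  refine invariant_map_of_semiconj measurable_levelZero (fun s => ?_)
    hQ.invariant_volume_of_digitMap
  rw [kernel_apply, hQ.apply_eq, Measure.map_map measurable_levelZero (measurable_of_finite _)]
  rfl

lemma eq_stationary_of_invariant {π : Measure LevelSpace} [IsProbabilityMeasure π]
    (hπ : kernel.Invariant π) : π = stationary :=
  orderSplitting_kernel.eq_of_invariant
    (ENNReal.toReal_pos uniformOn_univ_singleton_zero_ne_zero (measure_ne_top _ _))
    monotoneKernel_kernel hπ invariant_stationary

/-- The union of the levels `k ≥ 1`, which a chain started there never leaves. -/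
def upperLevels : Set LevelSpace := {x | x.2 ≠ 0}

lemma isClopen_upperLevels : IsClopen upperLevels :=
  (isClopen_discrete {k : ℕ | k ≠ 0}).preimage (continuous_snd (X := unitInterval) (Y := ℕ))

lemma kernel_compl_upperLevels {x : LevelSpace} (hx : x ∈ upperLevels) :
    kernel x upperLevelsᶜ = 0 := by
  rw [kernel_apply, Measure.map_apply (measurable_of_finite _)
    isClopen_upperLevels.compl.isOpen.measurableSet]
  suffices h : randomMap x ⁻¹' upperLevelsᶜ = ∅ by rw [h, measure_empty]
  obtain ⟨s, _ | k⟩ := x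
  · exact absurd rfl hx
  · simp [upperLevels, randomMap, nextLevel]

lemma stationary_upperLevels : stationary upperLevels = 0 := by
  rw [stationary, Measure.map_apply measurable_levelZero isClopen_upperLevels.isOpen.measurableSet]
  simp [upperLevels, levelZero]

lemma exists_not_tendsto_kpow_kernel (x : LevelSpace) (hx : x ∈ upperLevels) :
    ∃ g : BoundedContinuousFunction LevelSpace ℝ,
      ¬ Tendsto (fun n => ∫ z, g z ∂(kpow kernel n x)) atTop (𝓝 (∫ z, g z ∂stationary)) :=
  exists_not_tendsto_integral_of_isClopen isClopen_upperLevels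
    (kpow_apply_compl_eq_zero isClopen_upperLevels.isOpen.measurableSet
      (fun _ => kernel_compl_upperLevels) hx) stationary_upperLevels

end LevelSpace

/-- Theorem 3.4 vi: there exist an ordered Polish space `E` and a monotone
Markov kernel `P` on it such that `M` is achievable and `P` has a (necessarily unique)
stationary distribution `π`, yet for some `y` the laws of `Xₙʸ` do not converge weakly
to `π`. -/
theorem stmt12 :
    ∃ (E : Type) (_ : MetricSpace E) (_ : PolishSpace E) (_ : MeasurableSpace E)
      (_ : BorelSpace E) (_ : PartialOrder E) (_ : OrderClosedTopology E)
      (P : Kernel E E) (_ : IsMarkovKernel P) (π : Measure E),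
      MonotoneKernel P ∧ Achievable P {p : E × E | p.1 ≤ p.2} ∧
      IsProbabilityMeasure π ∧ π.bind (fun a => P a) = π ∧
      (∀ π' : Measure E, IsProbabilityMeasure π' → π'.bind (fun a => P a) = π' → π' = π) ∧
      ∃ y : E, ¬ ∀ g : BoundedContinuousFunction E ℝ,
        Tendsto (fun n => ∫ z, g z ∂(kpow P n y)) atTop (nhds (∫ z, g z ∂π)) := by
  obtain ⟨g, hg⟩ := LevelSpace.exists_not_tendsto_kpow_kernel (0, 1) one_ne_zero
  exact ⟨LevelSpace, inferInstance, inferInstance, inferInstance, inferInstance, inferInstance,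
    inferInstance, LevelSpace.kernel, inferInstance, LevelSpace.stationary,
    LevelSpace.monotoneKernel_kernel, LevelSpace.achievable_kernel, inferInstance,
    LevelSpace.invariant_stationary, fun _ _ => LevelSpace.eq_stationary_of_invariant,
    (0, 1), fun htendsto => hg (htendsto g)⟩
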